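/- Let f : Fin k → ℝ with Σ_a f a = 1, and let G = (A, W_f) be a k-colored game whose goal W_f is the set of all color sequences with frequency vector f. Then G is determined, and if player 1 has a winning strategy, then player 1 has a memoryless winning strategy. -/

import Mathlib

open Filter Topology

/-- Number of indices `i < n` with `x i = a`. -/
def cnt {k : ℕ} (x : ℕ → Fin k) (a : Fin k) (n : ℕ) : ℕ :=
  ((Finset.range n).filter fun i => x i = a).card

/-- Color `a` has frequency `r` in `x`. -/
def HasFreq {k : ℕ} (x : ℕ → Fin k) (a : Fin k) (r : ℝ) : Prop :=
  Tendsto (fun n : ℕ => (cnt x a n : ℝ) / (n : ℝ)) atTop (𝓝 r)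

/-- `x` has frequency vector `f`. -/
def HasFreqVector {k : ℕ} (x : ℕ → Fin k) (f : Fin k → ℝ) : Prop :=
  ∀ a : Fin k, HasFreq x a (f a)

/-- A `k`-colored arena on node type `V`: a partition of the nodes given by the
predicate `isV1` (player 1's nodes; player 0 owns the rest), an initial node
and a serial set of colored edges `(source, color, target)`. -/
structure Arena (V : Type) (k : ℕ) where
  isV1 : V → Prop
  vini : V
  E : Set (V × Fin k × V)
  serial : ∀ v : V, ∃ e ∈ E, e.1 = v

namespace Arena

variable {V : Type} {k : ℕ}

/-- The last node of a finite history (the target of its last edge), `vini`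
for the empty history. -/
def lastNode (A : Arena V k) (l : List (V × Fin k × V)) : V :=
  (l.getLast?.map fun e => e.2.2).getD A.vini

/-- A valid finite history: a finite path from `vini` along edges of the arena. -/
def IsHistory (A : Arena V k) (l : List (V × Fin k × V)) : Prop :=
  (∀ e ∈ l, e ∈ A.E) ∧ List.Chain' (fun e f => e.2.2 = f.1) l ∧
    ∀ e, l.head? = some e → e.1 = A.vini

/-- `σ` is a strategy for the player owning the nodes satisfying `inP`:
on every valid history ending in a node of that player (including the empty
history when `vini` is such a node) it returns an edge of the arena extending
the history. -/
def IsStrategy (A : Arena V k) (inP : V → Prop)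
    (σ : List (V × Fin k × V) → V × Fin k × V) : Prop :=
  ∀ l, A.IsHistory l → inP (A.lastNode l) → σ l ∈ A.E ∧ (σ l).1 = A.lastNode l

/-- An infinite play: an infinite path along edges of the arena starting at `vini`. -/
def IsPlay (A : Arena V k) (p : ℕ → V × Fin k × V) : Prop :=
  (p 0).1 = A.vini ∧ ∀ i : ℕ, p i ∈ A.E ∧ (p i).2.2 = (p (i + 1)).1

/-- The play `p` is consistent with the strategy `σ` of the player owning the
nodes satisfying `inP`. -/
def Consistent (A : Arena V k) (inP : V → Prop)
    (σ : List (V × Fin k × V) → V × Fin k × V) (p : ℕ → V × Fin k × V) : Prop :=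
  (inP A.vini → p 0 = σ []) ∧
    ∀ i : ℕ, inP ((p i).2.2) → p (i + 1) = σ (List.ofFn fun j : Fin (i + 1) => p j)

/-- The color sequence of a play. -/
def colorSeq (p : ℕ → V × Fin k × V) : ℕ → Fin k := fun i => (p i).2.1

/-- Player 0's nodes. -/
def isV0 (A : Arena V k) : V → Prop := fun v => ¬ A.isV1 v

/-- `σ` is a winning strategy for player 0 w.r.t. the goal `W`. -/
def WinningFor0 (A : Arena V k) (W : Set (ℕ → Fin k))
    (σ : List (V × Fin k × V) → V × Fin k × V) : Prop :=
  A.IsStrategy A.isV0 σ ∧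
    ∀ p : ℕ → V × Fin k × V, A.IsPlay p → A.Consistent A.isV0 σ p → colorSeq p ∈ W

/-- `σ` is a winning strategy for player 1 w.r.t. the goal `W`. -/
def WinningFor1 (A : Arena V k) (W : Set (ℕ → Fin k))
    (σ : List (V × Fin k × V) → V × Fin k × V) : Prop :=
  A.IsStrategy A.isV1 σ ∧
    ∀ p : ℕ → V × Fin k × V, A.IsPlay p → A.Consistent A.isV1 σ p → colorSeq p ∉ W

/-- A strategy is memoryless if its value on a (valid) history only depends on
the last node of the history. -/
def Memoryless (A : Arena V k) (σ : List (V × Fin k × V) → V × Fin k × V) : Prop :=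
  ∀ l l', A.IsHistory l → A.IsHistory l' → A.lastNode l = A.lastNode l' → σ l = σ l'

end Arena

/-!
Two properties of the goal suffice: a tail of a sequence in the goal is in the goal, and so is a
shuffle of two sequences in the goal. Induct on the number of edges of player 1. If two of them,
`e₁ ≠ e₂`, leave the same node `v`, delete either one. A positional win of player 1 in a smaller
arena persists in the arena, because only an edge of player 1 was deleted. Otherwise player 0 wins
both smaller arenas and combines the two strategies, running each on its own part of the play:
whenever the play is at `v`, the edge chosen by player 1 survives in one of the smaller arenas, and
the strategy for that arena takes over until the next visit to `v`, while the other one waits at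
`v`. The resulting play is a shuffle of two plays won by player 0. If player 1 has no choices left,
player 0 wins by following any play in the goal, and if there is none, player 1 wins trivially.
-/

section Goals

variable {α : Type*}

/-- Tail-closed goals: the half of prefix independence that allows a finite prefix to be deleted. -/
def IsTailClosed (W : Set (ℕ → α)) : Prop :=
  ∀ x ∈ W, ∀ N, (fun i => x (i + N)) ∈ W

/-- Shuffle-closed goals: a sequence split into two subsequences belongs to the goal as soon as
each infinite part does. A finite part is unconstrained, so such a goal is also closed under the
insertion of finitely many colors. -/
def IsShuffleClosed (W : Set (ℕ → α)) : Prop :=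
  ∀ (x : ℕ → α) (P : ℕ → Prop),
    ({i | P i}.Infinite → (fun j => x (Nat.nth P j)) ∈ W) →
    ({i | ¬ P i}.Infinite → (fun j => x (Nat.nth (fun i => ¬ P i) j)) ∈ W) → x ∈ W

end Goals

section Frequency

open Asymptotics

variable {k : ℕ} {x : ℕ → Fin k} {a : Fin k} {r : ℝ}

theorem cnt_eq_count (x : ℕ → Fin k) (a : Fin k) (n : ℕ) :
    cnt x a n = Nat.count (fun i => x i = a) n :=
  (Nat.count_eq_card_filter_range _ n).symm

theorem cnt_succ (x : ℕ → Fin k) (a : Fin k) (n : ℕ) :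
    cnt x a (n + 1) = cnt x a n + if x n = a then 1 else 0 := by
  simp only [cnt_eq_count, Nat.count_succ]

theorem hasFreq_iff_isLittleO :
    HasFreq x a r ↔ (fun n : ℕ => (cnt x a n : ℝ) - r * n) =o[atTop] (fun n : ℕ => (n : ℝ)) := by
  have hne : ∀ᶠ n : ℕ in atTop, (n : ℝ) ≠ 0 :=
    (eventually_ne_atTop 0).mono fun n hn => Nat.cast_ne_zero.mpr hn
  rw [HasFreq, isLittleO_iff_tendsto' (hne.mono fun n hn h0 => absurd h0 hn),
    ← tendsto_sub_nhds_zero_iff]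
  refine tendsto_congr' (hne.mono fun n hn => ?_)
  field_simp

theorem isLittleO_const_natCast (c : ℝ) : (fun _ : ℕ => c) =o[atTop] (fun n : ℕ => (n : ℝ)) :=
  isLittleO_const_left.mpr (.inr (tendsto_norm_atTop_atTop.comp tendsto_natCast_atTop_atTop))

theorem HasFreq.tail (h : HasFreq x a r) (N : ℕ) : HasFreq (fun i => x (i + N)) a r := by
  rw [hasFreq_iff_isLittleO] at h ⊢
  have hshift : (fun n : ℕ => ((n + N : ℕ) : ℝ)) =O[atTop] (fun n : ℕ => (n : ℝ)) := by
    simpa only [Nat.cast_add] using (isBigO_refl _ _).add (isLittleO_const_natCast N).isBigO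
  have htail : (fun n : ℕ => (cnt x a (n + N) : ℝ) - r * (n + N : ℕ))
      =o[atTop] (fun n : ℕ => (n : ℝ)) :=
    (h.comp_tendsto (tendsto_add_atTop_nat N)).trans_isBigO hshift
  refine (htail.add (isLittleO_const_natCast (r * N - cnt x a N))).congr_left fun n => ?_
  simp only [cnt_eq_count, Nat.count_add']
  push_cast
  ring

theorem count_add_count_not (P : ℕ → Prop) [DecidablePred P] (n : ℕ) :
    Nat.count P n + Nat.count (fun i => ¬ P i) n = n := by
  simpa only [Nat.count_eq_card_filter_range, Finset.card_range] using
    Finset.card_filter_add_card_filter_not (s := Finset.range n) P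

theorem cnt_eq_cnt_nth_add_cnt_nth_not (x : ℕ → Fin k) (a : Fin k) (P : ℕ → Prop)
    [DecidablePred P] (n : ℕ) :
    cnt x a n = cnt (fun j => x (Nat.nth P j)) a (Nat.count P n) +
      cnt (fun j => x (Nat.nth (fun i => ¬ P i) j)) a (Nat.count (fun i => ¬ P i) n) := by
  induction n with
  | zero => simp only [Nat.count_zero, cnt_eq_count]
  | succ n ih =>
    by_cases hP : P n
    · simp only [Nat.count_succ, cnt_succ, ih, hP, if_true, not_true, if_false, add_zero,
        Nat.nth_count hP]
      omega
    · simp only [Nat.count_succ, cnt_succ, ih, hP, if_false, not_false_eq_true, if_true,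
        add_zero, Nat.nth_count (p := fun i => ¬ P i) hP]
      omega

theorem isLittleO_comp_count {d : ℕ → ℝ} {P : ℕ → Prop} [DecidablePred P]
    (hd : {i | P i}.Infinite → d =o[atTop] (fun n : ℕ => (n : ℝ))) :
    (fun n => d (Nat.count P n)) =o[atTop] (fun n : ℕ => (n : ℝ)) := by
  by_cases hP : {i | P i}.Infinite
  · have hcount : Tendsto (Nat.count P) atTop atTop :=
      tendsto_atTop_atTop_of_monotone (Nat.count_monotone P) fun b =>
        ⟨Nat.nth P b, (Nat.count_nth_of_infinite hP b).ge⟩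
    refine ((hd hP).comp_tendsto hcount).trans_isBigO (IsBigO.of_bound 1 (.of_forall fun n => ?_))
    simpa using Nat.count_le (p := P) (n := n)
  · have hfin : {i | P i}.Finite := Set.not_infinite.mp hP
    have hrange : (Set.range fun n => d (Nat.count P n)).Finite :=
      ((Set.finite_Iic _).image d).subset <| Set.range_subset_iff.mpr fun n =>
        Set.mem_image_of_mem d (Nat.count_le_card hfin n)
    obtain ⟨C, hC⟩ := hrange.isBounded.exists_norm_le
    have hbdd : (fun n => d (Nat.count P n)) =O[atTop] (fun _ : ℕ => (1 : ℝ)) :=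
      IsBigO.of_bound C (.of_forall fun n => by simpa using hC _ ⟨n, rfl⟩)
    exact hbdd.trans_isLittleO (isLittleO_const_natCast 1)

theorem hasFreq_of_shuffle (P : ℕ → Prop)
    (hP : {i | P i}.Infinite → HasFreq (fun j => x (Nat.nth P j)) a r)
    (hnP : {i | ¬ P i}.Infinite → HasFreq (fun j => x (Nat.nth (fun i => ¬ P i) j)) a r) :
    HasFreq x a r := by
  classical
  rw [hasFreq_iff_isLittleO]
  refine ((isLittleO_comp_count fun h => hasFreq_iff_isLittleO.mp (hP h)).add
    (isLittleO_comp_count fun h => hasFreq_iff_isLittleO.mp (hnP h))).congr_left fun n => ?_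
  rw [cnt_eq_cnt_nth_add_cnt_nth_not x a P n]
  have hn : (Nat.count P n : ℝ) + Nat.count (fun i => ¬ P i) n = n :=
    mod_cast count_add_count_not P n
  push_cast
  linear_combination -r * hn

variable (f : Fin k → ℝ)

theorem isTailClosed_hasFreqVector : IsTailClosed {x | HasFreqVector x f} :=
  fun _ hx N a => (hx a).tail N

theorem isShuffleClosed_hasFreqVector : IsShuffleClosed {x | HasFreqVector x f} :=
  fun _ P hP hnP a => hasFreq_of_shuffle P (fun h => hP h a) fun h => hnP h a

end Frequency

theorem apply_nth_succ_of_const {β : Type*} {g : ℕ → β} {P : ℕ → Prop} (hP : {i | P i}.Infinite)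
    (hg : ∀ i, ¬ P i → g (i + 1) = g i) (j : ℕ) :
    g (Nat.nth P (j + 1)) = g (Nat.nth P j + 1) := by
  have hconst : ∀ n, Nat.nth P j + 1 ≤ n → n ≤ Nat.nth P (j + 1) → g n = g (Nat.nth P j + 1) := by
    intro n hn
    induction n, hn using Nat.le_induction with
    | base => exact fun _ => rfl
    | succ n hn ih =>
      intro hlt
      rw [hg n fun hPn => ?_, ih (by omega)]
      have := Nat.le_nth_of_lt_nth_succ hlt hPn
      omega
  exact hconst _ (Nat.nth_strictMono hP j.lt_succ_self) le_rfl

theorem ofFn_succ_eq_append {β : Type*} (p : ℕ → β) (n : ℕ) :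
    (List.ofFn fun j : Fin (n + 1) => p j) = (List.ofFn fun j : Fin n => p j) ++ [p n] :=
  List.ofFn_succ_last

/-- A nondeterministic memory strategy of player 0 on the edges `E`. Every state of the memory
stands for the node `node s` of the arena, and `Step s e t` says that the strategy, being in state
`s`, admits the edge `e` and may then move to the state `t`. It admits some edge at each node of
player 0 and all edges at the nodes of player 1. -/
structure MemoryStrategy {V : Type} {k : ℕ} (isV1 : V → Prop) (E : Set (V × Fin k × V)) where
  State : Type
  node : State → V
  Step : State → V × Fin k × V → State → Prop
  mem_of_step : ∀ {s e t}, Step s e t → e ∈ E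
  source_of_step : ∀ {s e t}, Step s e t → e.1 = node s
  target_of_step : ∀ {s e t}, Step s e t → e.2.2 = node t
  exists_step : ∀ s, ¬ isV1 (node s) → ∃ e t, Step s e t
  exists_step_of_mem : ∀ s, ∀ e ∈ E, isV1 (node s) → e.1 = node s → ∃ t, Step s e t

namespace MemoryStrategy

variable {V : Type} {k : ℕ} {isV1 : V → Prop} {E E₁ E₂ : Set (V × Fin k × V)}
  {W : Set (ℕ → Fin k)}

/-- Infinite runs of a memory strategy, from an arbitrary state. -/
def IsRun (S : MemoryStrategy isV1 E) (s : ℕ → S.State) (e : ℕ → V × Fin k × V) : Prop :=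
  ∀ i, S.Step (s i) (e i) (s (i + 1))

/-- A memory strategy is winning for the goal `W` if all its runs, from whichever state they
start, have their color sequence in `W`. -/
def IsWinning (S : MemoryStrategy isV1 E) (W : Set (ℕ → Fin k)) : Prop :=
  ∀ s e, S.IsRun s e → Arena.colorSeq e ∈ W

theorem isRun_nth (S : MemoryStrategy isV1 E) (s : ℕ → S.State) (e : ℕ → V × Fin k × V)
    {P : ℕ → Prop} (hP : {i | P i}.Infinite) (hstep : ∀ i, P i → S.Step (s i) (e i) (s (i + 1)))
    (hwait : ∀ i, ¬ P i → s (i + 1) = s i) :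
    S.IsRun (fun j => s (Nat.nth P j)) (fun j => e (Nat.nth P j)) := by
  intro j
  simpa only [apply_nth_succ_of_const hP hwait] using hstep _ (Nat.nth_mem_of_infinite hP j)

/-- The strategy `S` on a larger set of edges, the new ones leaving only nodes that `S` avoids. -/
def extend (S : MemoryStrategy isV1 E₁) (hsub : E₁ ⊆ E)
    (hnew : ∀ e ∈ E, ∀ s, e.1 = S.node s → e ∈ E₁) : MemoryStrategy isV1 E where
  State := S.State
  node := S.node
  Step := S.Step
  mem_of_step h := hsub (S.mem_of_step h)
  source_of_step := S.source_of_step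
  target_of_step := S.target_of_step
  exists_step := S.exists_step
  exists_step_of_mem s e he h1 hes := S.exists_step_of_mem s e (hnew e he s hes) h1 hes

theorem IsWinning.extend {S : MemoryStrategy isV1 E₁} (hS : S.IsWinning W) (hsub : E₁ ⊆ E)
    (hnew : ∀ e ∈ E, ∀ s, e.1 = S.node s → e ∈ E₁) : (S.extend hsub hnew).IsWinning W :=
  hS

/-- A state of the merge of `X` and `Y` at the node `v`: one of the two strategies is at the
current node `pos`, the other one waits at `v`. -/
structure MergeState (X : MemoryStrategy isV1 E₁) (Y : MemoryStrategy isV1 E₂) (v : V) where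
  left : X.State
  right : Y.State
  pos : V
  active : (X.node left = pos ∧ Y.node right = v) ∨ (X.node left = v ∧ Y.node right = pos)

/-- The moves of the merge of `X` and `Y`: one of the two strategies moves, the other one waits. -/
def MergeState.Step {X : MemoryStrategy isV1 E₁} {Y : MemoryStrategy isV1 E₂} {v : V}
    (s : MergeState X Y v) (e : V × Fin k × V) (t : MergeState X Y v) : Prop :=
  e.1 = s.pos ∧ e.2.2 = t.pos ∧
    ((X.Step s.left e t.left ∧ t.right = s.right) ∨ (Y.Step s.right e t.right ∧ t.left = s.left))

section Merge

variable {X : MemoryStrategy isV1 E₁} {Y : MemoryStrategy isV1 E₂} {v : V}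
  {s : MergeState X Y v} {e : V × Fin k × V}

theorem MergeState.exists_step_left (hx : X.node s.left = s.pos) (hy : Y.node s.right = v)
    {x : X.State} (h : X.Step s.left e x) : ∃ t, s.Step e t :=
  ⟨⟨x, s.right, e.2.2, .inl ⟨(X.target_of_step h).symm, hy⟩⟩,
    (X.source_of_step h).trans hx, rfl, .inl ⟨h, rfl⟩⟩

theorem MergeState.exists_step_right (hx : X.node s.left = v) (hy : Y.node s.right = s.pos)
    {y : Y.State} (h : Y.Step s.right e y) : ∃ t, s.Step e t :=
  ⟨⟨s.left, y, e.2.2, .inr ⟨hx, (Y.target_of_step h).symm⟩⟩,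
    (Y.source_of_step h).trans hy, rfl, .inr ⟨h, rfl⟩⟩

theorem MergeState.exists_step_of_mem (hE : ∀ e, e.1 ≠ v → (e ∈ E₁ ↔ e ∈ E₂))
    (he : e ∈ E₁ ∪ E₂) (h1 : isV1 s.pos) (hes : e.1 = s.pos) : ∃ t, s.Step e t := by
  have left_step (hx : X.node s.left = s.pos) (hy : Y.node s.right = v) (he₁ : e ∈ E₁) :
      ∃ t, s.Step e t :=
    have ⟨_, h⟩ := X.exists_step_of_mem _ e he₁ (hx ▸ h1) (hes.trans hx.symm)
    exists_step_left hx hy h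
  have right_step (hx : X.node s.left = v) (hy : Y.node s.right = s.pos) (he₂ : e ∈ E₂) :
      ∃ t, s.Step e t :=
    have ⟨_, h⟩ := Y.exists_step_of_mem _ e he₂ (hy ▸ h1) (hes.trans hy.symm)
    exists_step_right hx hy h
  by_cases hv : s.pos = v
  · have hboth : X.node s.left = v ∧ Y.node s.right = v := by
      simpa only [hv, or_self] using s.active
    exact he.elim (left_step (hboth.1.trans hv.symm) hboth.2)
      (right_step hboth.1 (hboth.2.trans hv.symm))
  · have hE' : e ∈ E₁ ↔ e ∈ E₂ := hE e (hes ▸ hv)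
    rcases s.active with ⟨hx, hy⟩ | ⟨hx, hy⟩
    · exact left_step hx hy (he.elim id hE'.mpr)
    · exact right_step hx hy (he.elim hE'.mp id)

end Merge

/-- Two memory strategies merged at the node `v`: every edge of the play is a move of one of them,
while the other one keeps waiting at `v`. At `v` itself an edge that both of them admit may be
played by either. -/
def merge (X : MemoryStrategy isV1 E₁) (Y : MemoryStrategy isV1 E₂) (v : V)
    (hE : ∀ e, e.1 ≠ v → (e ∈ E₁ ↔ e ∈ E₂)) : MemoryStrategy isV1 (E₁ ∪ E₂) where
  State := MergeState X Y v
  node := MergeState.pos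
  Step := MergeState.Step
  mem_of_step := fun ⟨_, _, h⟩ =>
    h.imp (fun hX => X.mem_of_step hX.1) fun hY => Y.mem_of_step hY.1
  source_of_step h := h.1
  target_of_step h := h.2.1
  exists_step s hs := by
    rcases s.active with ⟨hx, hy⟩ | ⟨hx, hy⟩
    · obtain ⟨e, _, h⟩ := X.exists_step s.left (hx ▸ hs)
      exact ⟨e, MergeState.exists_step_left hx hy h⟩
    · obtain ⟨e, _, h⟩ := Y.exists_step s.right (hy ▸ hs)
      exact ⟨e, MergeState.exists_step_right hx hy h⟩
  exists_step_of_mem _ _ := MergeState.exists_step_of_mem hE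

theorem IsWinning.merge {X : MemoryStrategy isV1 E₁} {Y : MemoryStrategy isV1 E₂}
    (hX : X.IsWinning W) (hY : Y.IsWinning W) (hW : IsShuffleClosed W) {v : V}
    (hE : ∀ e, e.1 ≠ v → (e ∈ E₁ ↔ e ∈ E₂)) : (X.merge Y v hE).IsWinning W := by
  intro s e hrun
  let P : ℕ → Prop := fun i =>
    X.Step (s i).left (e i) (s (i + 1)).left ∧ (s (i + 1)).right = (s i).right
  have hnP (i : ℕ) (hi : ¬ P i) :
      Y.Step (s i).right (e i) (s (i + 1)).right ∧ (s (i + 1)).left = (s i).left :=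
    (hrun i).2.2.resolve_left hi
  have hrunX (hinf : {i | P i}.Infinite) :=
    X.isRun_nth (fun i => (s i).left) e hinf (fun i hi => hi.1) fun i hi => (hnP i hi).2
  have hrunY (hinf : {i | ¬ P i}.Infinite) :=
    Y.isRun_nth (fun i => (s i).right) e hinf (fun i hi => (hnP i hi).1)
      fun i hi => (not_not.mp hi).2
  exact hW _ P (fun hinf => hX _ _ (hrunX hinf)) fun hinf => hY _ _ (hrunY hinf)

end MemoryStrategy

namespace Arena

variable {V : Type} {k : ℕ} {A : Arena V k} {W : Set (ℕ → Fin k)}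

section Plays

variable {p : ℕ → V × Fin k × V}

theorem lastNode_append_singleton (A : Arena V k) (l : List (V × Fin k × V)) (e : V × Fin k × V) :
    A.lastNode (l ++ [e]) = e.2.2 := by
  simp only [lastNode, List.getLast?_concat, Option.map_some, Option.getD_some]

theorem IsPlay.lastNode_ofFn (hp : A.IsPlay p) (n : ℕ) :
    A.lastNode (List.ofFn fun j : Fin n => p j) = (p n).1 := by
  cases n with
  | zero => exact hp.1.symm
  | succ n => rw [ofFn_succ_eq_append, lastNode_append_singleton, (hp.2 n).2]

theorem IsPlay.consistent_iff (hp : A.IsPlay p) {inP : V → Prop}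
    {σ : List (V × Fin k × V) → V × Fin k × V} :
    A.Consistent inP σ p ↔ ∀ n, inP (p n).1 → p n = σ (List.ofFn fun j : Fin n => p j) := by
  constructor
  · rintro ⟨hzero, hsucc⟩ (_ | n) hn
    · exact hzero (hp.1 ▸ hn)
    · exact hsucc n ((hp.2 n).2 ▸ hn)
  · exact fun h => ⟨fun h0 => h 0 (hp.1.symm ▸ h0), fun n hn => h (n + 1) ((hp.2 n).2 ▸ hn)⟩

theorem IsHistory.append_singleton {l : List (V × Fin k × V)} {e : V × Fin k × V}
    (hl : A.IsHistory l) (he : e ∈ A.E) (hel : e.1 = A.lastNode l) : A.IsHistory (l ++ [e]) := by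
  obtain ⟨hmem, hchain, hhead⟩ := hl
  refine ⟨?_, List.isChain_append.2 ⟨hchain, List.isChain_singleton _, ?_⟩, ?_⟩
  · simpa only [List.forall_mem_append, List.forall_mem_singleton] using ⟨hmem, he⟩
  · intro d hd e' he'
    obtain rfl : e = e' := by simpa using he'
    rw [hel, lastNode, Option.mem_def.mp hd, Option.map_some, Option.getD_some]
  · rcases l.eq_nil_or_concat with rfl | ⟨l', d, rfl⟩
    · simpa [lastNode] using hel
    · simpa using hhead

theorem exists_isPlay_of_isStrategy {ν : List (V × Fin k × V) → V × Fin k × V}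
    (hν : A.IsStrategy (fun _ => True) ν) :
    ∃ p, A.IsPlay p ∧ ∀ n, p n = ν (List.ofFn fun j : Fin n => p j) := by
  let hist : ℕ → List (V × Fin k × V) := fun n => Nat.rec [] (fun _ l => l ++ [ν l]) n
  have hist_eq (n : ℕ) : hist n = List.ofFn fun j : Fin n => ν (hist j) := by
    induction n with
    | zero => rfl
    | succ n ih => rw [ofFn_succ_eq_append (fun j => ν (hist j)), ← ih]
  have isHistory (n : ℕ) : A.IsHistory (hist n) := by
    induction n with
    | zero => exact ⟨by simp [hist], List.isChain_nil, by simp [hist]⟩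
    | succ n ih => exact ih.append_singleton (hν _ ih trivial).1 (hν _ ih trivial).2
  have hmove (n : ℕ) := hν _ (isHistory n) trivial
  refine ⟨fun n => ν (hist n), ⟨(hmove 0).2, fun n => ⟨(hmove n).1, ?_⟩⟩, fun n => ?_⟩
  · rw [(hmove (n + 1)).2]
    exact (A.lastNode_append_singleton _ _).symm
  · rw [← hist_eq]

theorem exists_isPlay_consistent {σ τ : List (V × Fin k × V) → V × Fin k × V}
    (hσ : A.IsStrategy A.isV0 σ) (hτ : A.IsStrategy A.isV1 τ) :
    ∃ p, A.IsPlay p ∧ A.Consistent A.isV0 σ p ∧ A.Consistent A.isV1 τ p := by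
  classical
  obtain ⟨p, hp, hmove⟩ := exists_isPlay_of_isStrategy
    (ν := fun l => if A.isV1 (A.lastNode l) then τ l else σ l) (A := A) fun l hl _ => by
      dsimp only
      split_ifs with h
      · exact hτ l hl h
      · exact hσ l hl h
  simp only [hp.lastNode_ofFn] at hmove
  refine ⟨p, hp, hp.consistent_iff.mpr fun n hn => ?_, hp.consistent_iff.mpr fun n hn => ?_⟩
  · exact (hmove n).trans (if_neg hn)
  · exact (hmove n).trans (if_pos hn)

theorem WinningFor0.not_winningFor1 {σ τ : List (V × Fin k × V) → V × Fin k × V}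
    (hσ : A.WinningFor0 W σ) : ¬ A.WinningFor1 W τ := fun hτ =>
  have ⟨p, hp, hpσ, hpτ⟩ := exists_isPlay_consistent hσ.1 hτ.1
  hτ.2 p hp hpτ (hσ.2 p hp hpσ)

end Plays

/-- Player 0 has a memory strategy for the goal `W` that has a state at the initial node. -/
def HasMemoryWin (A : Arena V k) (W : Set (ℕ → Fin k)) : Prop :=
  ∃ S : MemoryStrategy A.isV1 A.E, S.IsWinning W ∧ ∃ s, S.node s = A.vini

theorem HasMemoryWin.exists_winningFor0 (h : A.HasMemoryWin W) : ∃ σ, A.WinningFor0 W σ := by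
  obtain ⟨S, hS, s₀, hs₀⟩ := h
  have exists_move (s : S.State) (v : V) : ∃ e ∈ A.E, e.1 = v ∧
      (S.node s = v → A.isV0 v → ∃ t, S.Step s e t) := by
    by_cases h : S.node s = v ∧ A.isV0 v
    · obtain ⟨rfl, hs⟩ := h
      obtain ⟨e, t, hstep⟩ := S.exists_step s hs
      exact ⟨e, S.mem_of_step hstep, S.source_of_step hstep, fun _ _ => ⟨t, hstep⟩⟩
    · obtain ⟨e, he, hev⟩ := A.serial v
      exact ⟨e, he, hev, fun hs hv => absurd ⟨hs, hv⟩ h⟩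
  have exists_next (s : S.State) (e : V × Fin k × V) :
      ∃ t, (∃ t', S.Step s e t') → S.Step s e t := by
    by_cases h : ∃ t, S.Step s e t
    · exact h.imp fun t ht _ => ht
    · exact ⟨s, fun h' => absurd h' h⟩
  choose move move_mem move_source move_step using exists_move
  choose next next_step using exists_next
  refine ⟨fun l => move (l.foldl next s₀) (A.lastNode l),
    fun l _ _ => ⟨move_mem _ _, move_source _ _⟩, fun p hp hc => ?_⟩
  simp only [hp.consistent_iff, hp.lastNode_ofFn] at hc
  let s (n : ℕ) : S.State := (List.ofFn fun j : Fin n => p j).foldl next s₀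
  have s_succ (n : ℕ) : s (n + 1) = next (s n) (p n) := by
    simp only [s, ofFn_succ_eq_append, List.foldl_append, List.foldl_cons, List.foldl_nil]
  have step_of_node (n : ℕ) (hn : S.node (s n) = (p n).1) : S.Step (s n) (p n) (s (n + 1)) := by
    rw [s_succ]
    refine next_step _ _ ?_
    by_cases h : A.isV1 (p n).1
    · exact S.exists_step_of_mem _ _ (hp.2 n).1 (hn ▸ h) hn.symm
    · rw [hc n h]
      exact move_step _ _ hn h
  have node_eq (n : ℕ) : S.node (s n) = (p n).1 := by
    induction n with
    | zero => exact hs₀.trans hp.1.symm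
    | succ n ih => rw [← S.target_of_step (step_of_node n ih), (hp.2 n).2]
  exact hS s p fun n => step_of_node n (node_eq n)

/-- Player 1 wins by playing the edge `g v` at each of her nodes `v`; the values of `g` at the
nodes of player 0 are irrelevant. In contrast to a memoryless `WinningFor1` strategy, `g` does not
refer to histories and so can be transferred between arenas with different edges. -/
def IsPositionalWin (A : Arena V k) (W : Set (ℕ → Fin k)) (g : V → V × Fin k × V) : Prop :=
  (∀ v, A.isV1 v → g v ∈ A.E ∧ (g v).1 = v) ∧
    ∀ p, A.IsPlay p → (∀ i, A.isV1 (p i).1 → p i = g (p i).1) → colorSeq p ∉ W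

theorem IsPositionalWin.exists_winningFor1_memoryless {g : V → V × Fin k × V}
    (hg : A.IsPositionalWin W g) : ∃ τ, A.WinningFor1 W τ ∧ A.Memoryless τ := by
  refine ⟨fun l => g (A.lastNode l), ⟨fun l _ hl => hg.1 _ hl, fun p hp hc => hg.2 p hp ?_⟩,
    fun l l' _ _ h => congrArg g h⟩
  simpa only [hp.consistent_iff, hp.lastNode_ofFn] using hc

/-- The arena without the edge `e`, which must not be the only one leaving its source. -/
def deleteEdge (A : Arena V k) (e : V × Fin k × V) (he : ∃ d ∈ A.E, d ≠ e ∧ d.1 = e.1) :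
    Arena V k where
  isV1 := A.isV1
  vini := A.vini
  E := A.E \ {e}
  serial v := by
    obtain ⟨c, hc, rfl⟩ := A.serial v
    obtain ⟨d, hd, hde, hsrc⟩ := he
    by_cases hce : c = e
    · exact ⟨d, ⟨hd, hde⟩, hce ▸ hsrc⟩
    · exact ⟨c, ⟨hc, hce⟩, rfl⟩

theorem IsPositionalWin.of_deleteEdge {e : V × Fin k × V} {he : ∃ d ∈ A.E, d ≠ e ∧ d.1 = e.1}
    {g : V → V × Fin k × V} (hg : (A.deleteEdge e he).IsPositionalWin W g) (hv : A.isV1 e.1) :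
    A.IsPositionalWin W g := by
  refine ⟨fun v h => ⟨(hg.1 v h).1.1, (hg.1 v h).2⟩,
    fun p hp hc => hg.2 p ⟨hp.1, fun i => ⟨⟨(hp.2 i).1, ?_⟩, (hp.2 i).2⟩⟩ hc⟩
  rintro (rfl : p i = e)
  exact (hg.1 _ hv).1.2 (hc i hv).symm

theorem hasMemoryWin_of_deleteEdge (hW : IsShuffleClosed W) {e₁ e₂ : V × Fin k × V}
    (hne : e₁ ≠ e₂) (hsrc : e₁.1 = e₂.1) {h₁ : ∃ d ∈ A.E, d ≠ e₁ ∧ d.1 = e₁.1}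
    {h₂ : ∃ d ∈ A.E, d ≠ e₂ ∧ d.1 = e₂.1} (hX : (A.deleteEdge e₁ h₁).HasMemoryWin W)
    (hY : (A.deleteEdge e₂ h₂).HasMemoryWin W) : A.HasMemoryWin W := by
  obtain ⟨X, hX, x, hx⟩ := hX
  obtain ⟨Y, hY, y, hy⟩ := hY
  by_cases hvisit : ∃ y', Y.node y' = e₂.1
  · obtain ⟨y', hy'⟩ := hvisit
    have hE : ∀ e : V × Fin k × V, e.1 ≠ e₂.1 → (e ∈ A.E \ {e₁} ↔ e ∈ A.E \ {e₂}) := by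
      intro e he
      have hne₁ : e ≠ e₁ := fun h => he (h ▸ hsrc)
      have hne₂ : e ≠ e₂ := fun h => he (h ▸ rfl)
      simp only [Set.mem_sdiff, Set.mem_singleton_iff, hne₁, hne₂]
    have hunion : A.E \ {e₁} ∪ A.E \ {e₂} = A.E := by
      rw [← Set.sdiff_inter, (Set.disjoint_singleton.mpr hne).inter_eq, Set.sdiff_empty]
    rw [HasMemoryWin, ← hunion]
    exact ⟨X.merge Y e₂.1 hE, hX.merge hY hW hE, ⟨x, y', A.vini, .inl ⟨hx, hy'⟩⟩, rfl⟩
  · have hnew : ∀ e ∈ A.E, ∀ s, e.1 = Y.node s → e ∈ A.E \ {e₂} := by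
      intro e he s hes
      exact ⟨he, fun h => hvisit ⟨s, hes.symm.trans (congrArg Prod.fst h)⟩⟩
    exact ⟨Y.extend Set.sdiff_subset hnew, hY.extend _ hnew, y, hy⟩

theorem IsPlay.hasMemoryWin {p : ℕ → V × Fin k × V} (hp : A.IsPlay p) (hpW : colorSeq p ∈ W)
    (hW : IsTailClosed W)
    (huniq : ∀ e ∈ A.E, ∀ e' ∈ A.E, A.isV1 e.1 → e.1 = e'.1 → e = e') : A.HasMemoryWin W := by
  let S : MemoryStrategy A.isV1 A.E :=
    { State := ℕ
      node := fun n => (p n).1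
      Step := fun n e m => e = p n ∧ m = n + 1
      mem_of_step := fun ⟨he, _⟩ => he ▸ (hp.2 _).1
      source_of_step := fun ⟨he, _⟩ => he ▸ rfl
      target_of_step := fun ⟨he, hm⟩ => he ▸ hm ▸ (hp.2 _).2
      exists_step := fun n _ => ⟨p n, n + 1, rfl, rfl⟩
      exists_step_of_mem := fun n e he h1 hen =>
        ⟨n + 1, huniq e he _ (hp.2 n).1 (hen.symm ▸ h1) hen, rfl⟩ }
  refine ⟨S, fun s e hrun => ?_, 0, hp.1⟩
  have s_eq (i : ℕ) : s i = i + s 0 := by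
    induction i with
    | zero => exact (Nat.zero_add _).symm
    | succ i ih => rw [(hrun i).2, ih, Nat.add_right_comm]
  have hcolor : colorSeq e = fun i => colorSeq p (i + s 0) := by
    funext i
    rw [colorSeq, (hrun i).1, s_eq, colorSeq]
  rw [hcolor]
  exact hW _ hpW _

theorem hasMemoryWin_or_isPositionalWin (hfin : {e ∈ A.E | A.isV1 e.1}.Finite)
    (htail : IsTailClosed W) (hshuffle : IsShuffleClosed W) :
    A.HasMemoryWin W ∨ ∃ g, A.IsPositionalWin W g := by
  induction hn : {e ∈ A.E | A.isV1 e.1}.ncard using Nat.strong_induction_on generalizing A with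
  | _ n ih =>
  by_cases huniq : ∀ e ∈ A.E, ∀ e' ∈ A.E, A.isV1 e.1 → e.1 = e'.1 → e = e'
  · by_cases hplay : ∃ p, A.IsPlay p ∧ colorSeq p ∈ W
    · obtain ⟨p, hp, hpW⟩ := hplay
      exact .inl (hp.hasMemoryWin hpW htail huniq)
    · choose g hg using A.serial
      exact .inr ⟨g, fun v _ => hg v, fun p hp _ hpW => hplay ⟨p, hp, hpW⟩⟩
  · push Not at huniq
    obtain ⟨e₁, he₁, e₂, he₂, hv, hsrc, hne⟩ := huniq
    have smaller (e) (he : e ∈ A.E) (hev : A.isV1 e.1) (h : ∃ d ∈ A.E, d ≠ e ∧ d.1 = e.1) :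
        (A.deleteEdge e h).HasMemoryWin W ∨ ∃ g, A.IsPositionalWin W g := by
      have hss : {d ∈ A.E \ {e} | A.isV1 d.1} ⊂ {d ∈ A.E | A.isV1 d.1} :=
        ⟨fun d hd => ⟨hd.1.1, hd.2⟩, fun hsub => (hsub ⟨he, hev⟩).1.2 rfl⟩
      exact (ih _ (hn ▸ Set.ncard_lt_ncard hss hfin) (A := A.deleteEdge e h)
        (hfin.subset hss.subset) rfl).imp_right fun ⟨g, hg⟩ => ⟨g, hg.of_deleteEdge hev⟩
    rcases smaller e₁ he₁ hv ⟨e₂, he₂, hne.symm, hsrc.symm⟩ with hX | hpos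
    · rcases smaller e₂ he₂ (hsrc ▸ hv) ⟨e₁, he₁, hne, hsrc⟩ with hY | hpos
      · exact .inl (hasMemoryWin_of_deleteEdge hshuffle hne hsrc hX hY)
      · exact .inr hpos
    · exact .inr hpos

end Arena

theorem freq_goal_determined_and_memoryless_for_player1_general
    {k : ℕ} {V : Type} (A : Arena V k) (hfin : {e ∈ A.E | A.isV1 e.1}.Finite)
    {W : Set (ℕ → Fin k)} (htail : IsTailClosed W) (hshuffle : IsShuffleClosed W) :
    ((∃ σ, A.WinningFor0 W σ) ∨ (∃ τ, A.WinningFor1 W τ)) ∧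
      ((∃ τ, A.WinningFor1 W τ) → ∃ τ, A.WinningFor1 W τ ∧ A.Memoryless τ) := by
  rcases Arena.hasMemoryWin_or_isPositionalWin hfin htail hshuffle with h | ⟨g, hg⟩
  · obtain ⟨σ, hσ⟩ := h.exists_winningFor0
    exact ⟨.inl ⟨σ, hσ⟩, fun ⟨τ, hτ⟩ => absurd hτ hσ.not_winningFor1⟩
  · obtain ⟨τ, hτ, hmem⟩ := hg.exists_winningFor1_memoryless
    exact ⟨.inr ⟨τ, hτ⟩, fun _ => ⟨τ, hτ, hmem⟩⟩

theorem freq_goal_determined_and_memoryless_for_player1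
    {k : ℕ} (hk : 1 ≤ k) {V : Type} [Fintype V] (A : Arena V k)
    (f : Fin k → ℝ) (hf : ∑ a : Fin k, f a = 1) :
    ((∃ σ, A.WinningFor0 {x | HasFreqVector x f} σ) ∨
        (∃ τ, A.WinningFor1 {x | HasFreqVector x f} τ)) ∧
      ((∃ τ, A.WinningFor1 {x | HasFreqVector x f} τ) →
        ∃ τ, A.WinningFor1 {x | HasFreqVector x f} τ ∧ A.Memoryless τ) :=
  freq_goal_determined_and_memoryless_for_player1_general A (Set.toFinite _)
    (isTailClosed_hasFreqVector f) (isShuffleClosed_hasFreqVector f)
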